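/- If the candidate model j is overspecified and n > p_j + 2, then the criterion cAÎ_u = m·log(2π σ̂_j²) + log|R̃| + (y − X(j)β̂_j − Zb̂_j)ᵀR⁻¹(y − X(j)β̂_j − Zb̂_j)/σ̂_j² + Δ_CS, with Δ_CS = (n/(n−p_j−2))·{tr[R̃⁻¹Λ] + tr[R̃⁻¹A(X(j)ᵀΣ⁻¹X(j))⁻¹Aᵀ]} + (n/(n−p_j))·{−tr[RΣ⁻¹] + tr[R P_j]}, is an exactly unbiased estimator of the conditional Akaike information under covariate shift: E(cAÎ_u) = cAI. -/

import Mathlib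

/-!
The proof is a change of variables that turns the Gaussian law of `y` into two independent
spherical Gaussians. Choose `K` with `K Kᵀ = (XᵀΣ⁻¹X)⁻¹`, `X = X(j)`, and `T` such that the columns
of `(XK, T)` are orthonormal for the inner product `Σ⁻¹` (`exists_frame`). Overspecification gives
`X(ω)β* = X c`, and `y = X c + X K u + T v` is an affine bijection carrying the law of `y` to
`u ~ N(0, σ*² I)`, `v ~ N(0, σ*² I)`, independent, with `v` of dimension `k = n - p_j`
(`exists_coords`, `affine_transfer`). In these coordinates

* `β̂ = c + K u`, `y - X β̂ = T v` and `σ̂² = |v|²/n`;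
* `y - X β̂ - Z b̂ = R Σ⁻¹ T v`, since `Σ - Z G Zᵀ = R`;
* `a = A K u`: as `X(ω)` has full column rank, `β*` is supported on `j`, whence `X̃(ω)β* = X̃(j) c`
  (`predictive_mean`).

Everything is then a moment computation (`core_moments`). By rotational symmetry of `v`,
`E[vᵀBv/|v|²] = tr B/k`; polar coordinates and `Γ(x+1) = x Γ(x)` give
`E[1/|v|²] = 1/(σ*² (k - 2))` for `k > 2`; and `E[uᵀDu] = σ*² tr D`. With `B = TᵀΣ⁻¹RΣ⁻¹T`
and `D = KᵀAᵀR̃⁻¹AK` one has `tr B = tr(RΣ⁻¹) - tr(R P_j)` and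
`tr D = tr(R̃⁻¹A(XᵀΣ⁻¹X)⁻¹Aᵀ)`, so `Δ_CS` exactly balances the two expectations
(`core_unbiased`). The terms `m log(2πσ̂²) + log|R̃|` are common to both sides
(`integral_add_common`).
-/

open Matrix MeasureTheory Real Filter Asymptotics

noncomputable section

/-- The covariate-shift linear mixed model setup of Kawakubo–Sugasawa–Kubokawa:
observed model `y ~ N_n(X(ω)β*, σ*²Σ)` with `Σ = Z G Zᵀ + R`, a candidate model
given by a subset of the columns of `X(ω)` (encoded by an embedding
`emb : Fin pj ↪ Fin pw`), and a predictive model with covariate matrices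
`X̃(ω)`, `Z̃` and error covariance matrix `R̃`. -/
structure CSModel (pw pj : ℕ) (n : ℕ) where
  q : ℕ
  m : ℕ
  /-- design matrix `X(ω)` of the full model -/
  Xw : Matrix (Fin n) (Fin pw) ℝ
  /-- the subset `j ⊆ {1,…,p_ω}` with `p_j` elements, as an embedding -/
  emb : Fin pj ↪ Fin pw
  Z : Matrix (Fin n) (Fin q) ℝ
  Gm : Matrix (Fin q) (Fin q) ℝ
  Rm : Matrix (Fin n) (Fin n) ℝ
  /-- true regression coefficients `β*` -/
  beta : Fin pw → ℝ
  /-- true variance `σ*²` -/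
  sig2 : ℝ
  /-- predictive-model covariates `X̃(ω)` -/
  Xtw : Matrix (Fin m) (Fin pw) ℝ
  Zt : Matrix (Fin m) (Fin q) ℝ
  Rt : Matrix (Fin m) (Fin m) ℝ
  hG : Gm.PosDef
  hR : Rm.PosDef
  hRt : Rt.PosDef
  hsig : 0 < sig2
  hrankw : Xw.rank = pw
  hrankj : (Xw.submatrix id ⇑emb).rank = pj

namespace CSModel

variable {pw pj n : ℕ} (M : CSModel pw pj n)

/-- `X(j)`: the columns of `X(ω)` indexed by `j`. -/
def Xj : Matrix (Fin n) (Fin pj) ℝ := M.Xw.submatrix id ⇑M.emb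

/-- `X̃(j)`: the columns of `X̃(ω)` indexed by `j`. -/
def Xtj : Matrix (Fin M.m) (Fin pj) ℝ := M.Xtw.submatrix id ⇑M.emb

/-- `Σ = Z G Zᵀ + R`. -/
def Sig : Matrix (Fin n) (Fin n) ℝ := M.Z * M.Gm * M.Zᵀ + M.Rm

/-- `Σ̃ = Z̃ G Z̃ᵀ + R̃`. -/
def Sigt : Matrix (Fin M.m) (Fin M.m) ℝ := M.Zt * M.Gm * M.Ztᵀ + M.Rt

/-- `Λ = Σ̃ − Z̃GZᵀΣ⁻¹ZGZ̃ᵀ`. -/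
def Lam : Matrix (Fin M.m) (Fin M.m) ℝ :=
  M.Sigt - M.Zt * M.Gm * M.Zᵀ * M.Sig⁻¹ * M.Z * M.Gm * M.Ztᵀ

/-- `A = X̃(j) − Z̃GZᵀΣ⁻¹X(j)`. -/
def Amat : Matrix (Fin M.m) (Fin pj) ℝ := M.Xtj - M.Zt * M.Gm * M.Zᵀ * M.Sig⁻¹ * M.Xj

/-- the GLS matrix `(X(j)ᵀΣ⁻¹X(j))⁻¹X(j)ᵀΣ⁻¹` of the candidate model. -/
def gls : Matrix (Fin pj) (Fin n) ℝ := (M.Xjᵀ * M.Sig⁻¹ * M.Xj)⁻¹ * M.Xjᵀ * M.Sig⁻¹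

/-- `β̂_j = (X(j)ᵀΣ⁻¹X(j))⁻¹X(j)ᵀΣ⁻¹ y`. -/
def betaHat (y : Fin n → ℝ) : Fin pj → ℝ := M.gls *ᵥ y

/-- the residual `y − X(j)β̂_j`. -/
def resid (y : Fin n → ℝ) : Fin n → ℝ := y - M.Xj *ᵥ M.betaHat y

/-- `σ̂_j² = (y − X(j)β̂_j)ᵀΣ⁻¹(y − X(j)β̂_j)/n`. -/
def sigHat2 (y : Fin n → ℝ) : ℝ := (M.resid y ⬝ᵥ (M.Sig⁻¹ *ᵥ M.resid y)) / n

/-- the GLS matrix of the full model. -/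
def glsw : Matrix (Fin pw) (Fin n) ℝ := (M.Xwᵀ * M.Sig⁻¹ * M.Xw)⁻¹ * M.Xwᵀ * M.Sig⁻¹

/-- the full-model GLS estimator `β̃ = β̂_ω`. -/
def betaTilde (y : Fin n → ℝ) : Fin pw → ℝ := M.glsw *ᵥ y

/-- the full-model residual `y − X(ω)β̃`. -/
def residw (y : Fin n → ℝ) : Fin n → ℝ := y - M.Xw *ᵥ M.betaTilde y

/-- `σ̂_ω²`, the ML variance estimator of the full model. -/
def sigHatw2 (y : Fin n → ℝ) : ℝ := (M.residw y ⬝ᵥ (M.Sig⁻¹ *ᵥ M.residw y)) / n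

/-- `σ̃² = (y − X(ω)β̃)ᵀΣ⁻¹(y − X(ω)β̃)/(n−p_ω)`, the unbiased full-model estimator. -/
def sigTilde2 (y : Fin n → ℝ) : ℝ :=
  (M.residw y ⬝ᵥ (M.Sig⁻¹ *ᵥ M.residw y)) / ((n : ℝ) - pw)

/-- the empirical Bayes predictor `b̂_j = GZᵀΣ⁻¹(y − X(j)β̂_j)`. -/
def bHat (y : Fin n → ℝ) : Fin M.q → ℝ := (M.Gm * M.Zᵀ * M.Sig⁻¹) *ᵥ M.resid y

/-- `a = (X̃(j)β̂_j − X̃(ω)β*) − Z̃GZᵀΣ⁻¹(X(j)β̂_j − X(ω)β*)`. -/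
def avec (y : Fin n → ℝ) : Fin M.m → ℝ :=
  (M.Xtj *ᵥ M.betaHat y - M.Xtw *ᵥ M.beta)
    - (M.Zt * M.Gm * M.Zᵀ * M.Sig⁻¹) *ᵥ (M.Xj *ᵥ M.betaHat y - M.Xw *ᵥ M.beta)

/-- `γ = tr(R̃⁻¹Λ) + tr[R̃⁻¹A(X(j)ᵀΣ⁻¹X(j))⁻¹Aᵀ]`. -/
def gam : ℝ :=
  (M.Rt⁻¹ * M.Lam).trace + (M.Rt⁻¹ * M.Amat * (M.Xjᵀ * M.Sig⁻¹ * M.Xj)⁻¹ * M.Amatᵀ).trace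

/-- `P_j = Σ⁻¹X(j)(X(j)ᵀΣ⁻¹X(j))⁻¹X(j)ᵀΣ⁻¹`. -/
def Pj : Matrix (Fin n) (Fin n) ℝ :=
  M.Sig⁻¹ * M.Xj * (M.Xjᵀ * M.Sig⁻¹ * M.Xj)⁻¹ * M.Xjᵀ * M.Sig⁻¹

/-- `P_ω = Σ⁻¹X(ω)(X(ω)ᵀΣ⁻¹X(ω))⁻¹X(ω)ᵀΣ⁻¹`. -/
def Pw : Matrix (Fin n) (Fin n) ℝ :=
  M.Sig⁻¹ * M.Xw * (M.Xwᵀ * M.Sig⁻¹ * M.Xw)⁻¹ * M.Xwᵀ * M.Sig⁻¹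

/-- `P̃_j = X̃(j)(X(j)ᵀΣ⁻¹X(j))⁻¹X(j)ᵀΣ⁻¹`. -/
def Ptj : Matrix (Fin M.m) (Fin n) ℝ :=
  M.Xtj * (M.Xjᵀ * M.Sig⁻¹ * M.Xj)⁻¹ * M.Xjᵀ * M.Sig⁻¹

/-- `B = P̃_jX(ω) − X̃(ω) + Z̃GZᵀ(P_ω − P_j)X(ω)`. -/
def Bmat : Matrix (Fin M.m) (Fin pw) ℝ :=
  M.Ptj * M.Xw - M.Xtw + M.Zt * M.Gm * M.Zᵀ * (M.Pw - M.Pj) * M.Xw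

/-- `C = X(ω)ᵀ(P_ω − P_j)X(ω)`. -/
def Cmat : Matrix (Fin pw) (Fin pw) ℝ := M.Xwᵀ * (M.Pw - M.Pj) * M.Xw

/-- `δ = β*ᵀCβ*/(nσ*²)`. -/
def delta : ℝ := (M.beta ⬝ᵥ (M.Cmat *ᵥ M.beta)) / ((n : ℝ) * M.sig2)

/-- `λ = 1/(1+δ)`. -/
def lam : ℝ := 1 / (1 + M.delta)

/-- the candidate model is overspecified: `X(ω)β*` lies in the column space of `X(j)`. -/
def Overspec : Prop := ∃ c : Fin pj → ℝ, M.Xw *ᵥ M.beta = M.Xj *ᵥ c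

/-- the density of the multivariate normal `N_k(μ, s·S)`. -/
def gaussDensity {k : ℕ} (mu : Fin k → ℝ) (s : ℝ) (S : Matrix (Fin k) (Fin k) ℝ)
    (y : Fin k → ℝ) : ℝ :=
  Real.exp (-((y - mu) ⬝ᵥ (S⁻¹ *ᵥ (y - mu))) / (2 * s)) /
    Real.sqrt ((2 * π * s) ^ k * S.det)

/-- expectation of `h` under the marginal distribution `y ~ N_n(X(ω)β*, σ*²Σ)`. -/
def E (h : (Fin n → ℝ) → ℝ) : ℝ :=
  ∫ y : Fin n → ℝ, h y * gaussDensity (M.Xw *ᵥ M.beta) M.sig2 M.Sig y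

/-- the conditional Akaike information under covariate shift,
`cAI = E[m log(2πσ̂_j²) + log|R̃| + tr(R̃⁻¹Λ)σ*²/σ̂_j² + aᵀR̃⁻¹a/σ̂_j²]`. -/
def cAI : ℝ :=
  M.E (fun y => (M.m : ℝ) * Real.log (2 * π * M.sigHat2 y) + Real.log M.Rt.det
    + (M.Rt⁻¹ * M.Lam).trace * M.sig2 / M.sigHat2 y
    + (M.avec y ⬝ᵥ (M.Rt⁻¹ *ᵥ M.avec y)) / M.sigHat2 y)

/-- `R* = nγ/(n − p_j − 2)`. -/
def Rstar : ℝ := (n : ℝ) * M.gam / ((n : ℝ) - pj - 2)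

/-- `R₁ = γ(λ − 1)`. -/
def R1 : ℝ := M.gam * (M.lam - 1)

/-- `R₂ = γ·n⁻¹{−2λ³ + (p_j+4)λ² − (p_j+2)}`. -/
def R2 : ℝ := M.gam * (-2 * M.lam ^ 3 + ((pj : ℝ) + 4) * M.lam ^ 2 - ((pj : ℝ) + 2)) / n

/-- the quadratic form `bᵀBᵀR̃⁻¹Bb`. -/
def quadB (b : Fin pw → ℝ) : ℝ := b ⬝ᵥ ((M.Bmatᵀ * M.Rt⁻¹ * M.Bmat) *ᵥ b)

/-- `R₃ = λ·β*ᵀBᵀR̃⁻¹Bβ*/σ*²`. -/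
def R3 : ℝ := M.lam * M.quadB M.beta / M.sig2

/-- `R₄ = n⁻¹{−2λ³ + (p_j+4)λ²}·β*ᵀBᵀR̃⁻¹Bβ*/σ*²`. -/
def R4 : ℝ := (-2 * M.lam ^ 3 + ((pj : ℝ) + 4) * M.lam ^ 2) * M.quadB M.beta / M.sig2 / n

/-- `δ(η)` as a function of `η = (β, σ²)`. -/
def deltaF (b : Fin pw → ℝ) (s : ℝ) : ℝ := (b ⬝ᵥ (M.Cmat *ᵥ b)) / ((n : ℝ) * s)

/-- `λ(η) = 1/(1+δ(η))`. -/
def lamF (b : Fin pw → ℝ) (s : ℝ) : ℝ := 1 / (1 + M.deltaF b s)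

/-- `R₃(η) = λ(η)·βᵀBᵀR̃⁻¹Bβ/σ²`. -/
def R3F (b : Fin pw → ℝ) (s : ℝ) : ℝ := M.lamF b s * M.quadB b / s

/-- `R₄(η) = n⁻¹{−2λ(η)³ + (p_j+4)λ(η)²}·βᵀBᵀR̃⁻¹Bβ/σ²`. -/
def R4F (b : Fin pw → ℝ) (s : ℝ) : ℝ :=
  (-2 * (M.lamF b s) ^ 3 + ((pj : ℝ) + 4) * (M.lamF b s) ^ 2) * M.quadB b / s / n

/-- `D = BᵀR̃⁻¹B`. -/
def Dmat : Matrix (Fin pw) (Fin pw) ℝ := M.Bmatᵀ * M.Rt⁻¹ * M.Bmat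

/-- `∂²R₃/∂β∂βᵀ` (closed form, Lemma 2). -/
def hessBeta (b : Fin pw → ℝ) (s : ℝ) : Matrix (Fin pw) (Fin pw) ℝ :=
  (M.quadB b / s) •
      ((-(2 / ((n : ℝ) * s * (1 + M.deltaF b s) ^ 2))) • M.Cmat
        + (8 / ((n : ℝ) ^ 2 * s ^ 2 * (1 + M.deltaF b s) ^ 3)) •
            vecMulVec (M.Cmat *ᵥ b) (M.Cmatᵀ *ᵥ b))
    - ((4 / ((n : ℝ) * s ^ 2 * (1 + M.deltaF b s) ^ 2)) •
        (vecMulVec (M.Dmat *ᵥ b) (M.Cmatᵀ *ᵥ b) + vecMulVec (M.Cmat *ᵥ b) (M.Dmatᵀ *ᵥ b)))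
    + (2 * M.lamF b s / s) • M.Dmat

/-- `∂²R₃/(∂σ²)²` (closed form, Lemma 2). -/
def hessSig (b : Fin pw → ℝ) (s : ℝ) : ℝ :=
  (M.quadB b / s) *
      (-(2 * (b ⬝ᵥ (M.Cmat *ᵥ b)) / ((n : ℝ) * s ^ 3 * (1 + M.deltaF b s) ^ 2))
        + 2 * (b ⬝ᵥ (M.Cmat *ᵥ b)) ^ 2 / ((n : ℝ) ^ 2 * s ^ 4 * (1 + M.deltaF b s) ^ 3))
    - 2 * M.quadB b * (b ⬝ᵥ (M.Cmat *ᵥ b)) / ((n : ℝ) * s ^ 4 * (1 + M.deltaF b s) ^ 2)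
    + 2 * M.lamF b s * M.quadB b / s ^ 3

/-- the second-order bias term
`B₁(η) = ½ tr[(∂²R₃/∂β∂βᵀ)(η)·σ²(X(ω)ᵀΣ⁻¹X(ω))⁻¹] + ((σ²)²/(n−p_ω))·(∂²R₃/(∂σ²)²)(η)`. -/
def B1 (b : Fin pw → ℝ) (s : ℝ) : ℝ :=
  (1 / 2) * (M.hessBeta b s * (s • (M.Xwᵀ * M.Sig⁻¹ * M.Xw)⁻¹)).trace
    + (s ^ 2 / ((n : ℝ) - pw)) * M.hessSig b s

/-- `λ̂ = ((n−p_j)/(n−p_ω))·(σ̂_ω²/σ̂_j²)`. -/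
def lamHat (y : Fin n → ℝ) : ℝ :=
  (((n : ℝ) - pj) / ((n : ℝ) - pw)) * (M.sigHatw2 y / M.sigHat2 y)

/-- `λ̂²` (the estimator of `λ²`). -/
def lamHat2 (y : Fin n → ℝ) : ℝ :=
  (((n : ℝ) - pj) * ((n : ℝ) - pj + 2) / (((n : ℝ) - pw) * ((n : ℝ) - pw + 2)))
    * (M.sigHatw2 y / M.sigHat2 y) ^ 2

/-- `λ̂³` (the estimator of `λ³`). -/
def lamHat3 (y : Fin n → ℝ) : ℝ :=
  (((n : ℝ) - pj) * ((n : ℝ) - pj + 2) * ((n : ℝ) - pj + 4)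
      / (((n : ℝ) - pw) * ((n : ℝ) - pw + 2) * ((n : ℝ) - pw + 4)))
    * (M.sigHatw2 y / M.sigHat2 y) ^ 3

/-- `R̂₁ = γ{λ̂ − (−2λ̂³ + (p_j+2)λ̂² − p_jλ̂)/n − 1}`. -/
def R1Hat (y : Fin n → ℝ) : ℝ :=
  M.gam * (M.lamHat y
    - (-2 * M.lamHat3 y + ((pj : ℝ) + 2) * M.lamHat2 y - (pj : ℝ) * M.lamHat y) / n - 1)

/-- `R̂₂ = γ(−2λ̂³ + (p_j+4)λ̂² − (p_j+2))/n`. -/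
def R2Hat (y : Fin n → ℝ) : ℝ :=
  M.gam * (-2 * M.lamHat3 y + ((pj : ℝ) + 4) * M.lamHat2 y - ((pj : ℝ) + 2)) / n

/-- the bias-corrected plug-in estimator `R̃̃₃ = R₃(η̃) − B₁(η̃)`. -/
def R3TT (y : Fin n → ℝ) : ℝ :=
  M.R3F (M.betaTilde y) (M.sigTilde2 y) - M.B1 (M.betaTilde y) (M.sigTilde2 y)

/-- the plug-in estimator `R̃₄ = R₄(η̃)`. -/
def R4T (y : Fin n → ℝ) : ℝ := M.R4F (M.betaTilde y) (M.sigTilde2 y)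

/-- the proposed criterion `cAÎ`. -/
def cAIhat (y : Fin n → ℝ) : ℝ :=
  (M.m : ℝ) * Real.log (2 * π * M.sigHat2 y) + Real.log M.Rt.det
    + M.Rstar + M.R1Hat y + M.R2Hat y + M.R3TT y + M.R4T y

/-- the covariance matrix `ZGZᵀ + I_n` of the parametric bootstrap sample. -/
def SigBoot : Matrix (Fin n) (Fin n) ℝ := M.Z * M.Gm * M.Zᵀ + 1

/-- bootstrap expectation: `E_{η̃}[h(η̃†)]` where `η̃†` are the full-model GLS estimators
computed from `y† ~ N_n(X(ω)β̃, σ̃²(ZGZᵀ + I_n))`. -/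
def Eboot (y : Fin n → ℝ) (h : (Fin pw → ℝ) → ℝ → ℝ) : ℝ :=
  ∫ yd : Fin n → ℝ, h (M.betaTilde yd) (M.sigTilde2 yd) *
    gaussDensity (M.Xw *ᵥ M.betaTilde y) (M.sigTilde2 y) M.SigBoot yd

/-- the bootstrap bias-corrected estimator
`R̂₃ = 2R₃(η̃) − E_{η̃}[R₃(η̃†)] + E_{η̃}[B₁(η̃†)] − B₁(η̃)`. -/
def R3Hat (y : Fin n → ℝ) : ℝ :=
  2 * M.R3F (M.betaTilde y) (M.sigTilde2 y) - M.Eboot y M.R3F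
    + M.Eboot y M.B1 - M.B1 (M.betaTilde y) (M.sigTilde2 y)

/-- the bootstrap bias-corrected estimator `R̂₄ = 2R₄(η̃) − E_{η̃}[R₄(η̃†)]`. -/
def R4Hat (y : Fin n → ℝ) : ℝ :=
  2 * M.R4F (M.betaTilde y) (M.sigTilde2 y) - M.Eboot y M.R4F

/-- the proposed criterion `cAÎ†`. -/
def cAIhatDag (y : Fin n → ℝ) : ℝ :=
  (M.m : ℝ) * Real.log (2 * π * M.sigHat2 y) + Real.log M.Rt.det
    + M.Rstar + M.R1Hat y + M.R2Hat y + M.R3Hat y + M.R4Hat y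

end CSModel

/-! ### Gaussian moments on Euclidean space -/

/-- Recursion for the half-line Gaussian moments, from the functional equation of `Γ`. -/
lemma radial_moment_succ (s : ℝ) (hs : 0 < s) (d : ℕ) :
    ∫ r in Set.Ioi (0 : ℝ), r ^ (d + 2) * Real.exp (-r ^ 2 / (2 * s))
      = s * (d + 1) * ∫ r in Set.Ioi (0 : ℝ), r ^ d * Real.exp (-r ^ 2 / (2 * s)) := by
  have hb : 0 < 1 / (2 * s) := by positivity
  have key : ∀ e : ℕ, ∫ r in Set.Ioi (0 : ℝ), r ^ e * Real.exp (-r ^ 2 / (2 * s))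
      = (1 / (2 * s)) ^ (-((e : ℝ) + 1) / 2) * (1 / 2) * Real.Gamma (((e : ℝ) + 1) / 2) := by
    intro e
    rw [← integral_rpow_mul_exp_neg_mul_rpow (p := 2) (q := (e : ℝ)) two_pos
      (by have : (0 : ℝ) ≤ e := Nat.cast_nonneg e
          linarith) hb]
    refine integral_congr_ae (Eventually.of_forall fun r => ?_)
    simp only [Real.rpow_natCast, Real.rpow_two]
    congr 2
    ring
  rw [key, key]
  have h1 : ((↑(d + 2) : ℝ) + 1) / 2 = ((d : ℝ) + 1) / 2 + 1 := by push_cast; ring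
  have h2 : -((↑(d + 2) : ℝ) + 1) / 2 = -((d : ℝ) + 1) / 2 - 1 := by push_cast; ring
  rw [h1, h2, Real.Gamma_add_one (by positivity), Real.rpow_sub_one hb.ne']
  field_simp

lemma radial_integrable (s : ℝ) (hs : 0 < s) (d : ℕ) :
    IntegrableOn (fun r : ℝ => r ^ d * Real.exp (-r ^ 2 / (2 * s))) (Set.Ioi 0) := by
  have hb : 0 < 1 / (2 * s) := by positivity
  refine (integrableOn_rpow_mul_exp_neg_mul_sq hb (s := (d : ℝ))
    (by have : (0 : ℝ) ≤ d := Nat.cast_nonneg d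
        linarith)).congr_fun (fun r _ => ?_) measurableSet_Ioi
  simp only [Real.rpow_natCast]
  congr 2
  ring

/-- The unnormalised density of the spherical Gaussian with variance `s` per coordinate. -/
def gaussW (s : ℝ) {k : ℕ} (v : EuclideanSpace ℝ (Fin k)) : ℝ :=
  Real.exp (-‖v‖ ^ 2 / (2 * s))

lemma integrable_gaussW (s : ℝ) (hs : 0 < s) (k : ℕ) :
    Integrable (fun v : EuclideanSpace ℝ (Fin k) => gaussW s v) := by
  rcases Nat.eq_zero_or_pos k with rfl | hk
  · have hc : (fun v : EuclideanSpace ℝ (Fin 0) => gaussW s v)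
        = fun _ => gaussW s (0 : EuclideanSpace ℝ (Fin 0)) := by
      funext v
      rw [Subsingleton.elim v 0]
    rw [hc]
    have : IsFiniteMeasure (volume : Measure (EuclideanSpace ℝ (Fin 0))) :=
      ⟨(Set.subsingleton_of_subsingleton.finite.isCompact).measure_lt_top⟩
    exact integrable_const _
  · have : Nonempty (Fin k) := ⟨⟨0, hk⟩⟩
    have h := (integrable_fun_norm_addHaar (volume : Measure (EuclideanSpace ℝ (Fin k)))
      (f := fun r : ℝ => Real.exp (-r ^ 2 / (2 * s)))).2
        (by simpa using radial_integrable s hs (k - 1))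
    exact h

lemma integrable_sq_gaussW (s : ℝ) (hs : 0 < s) (k : ℕ) (hk : 0 < k) :
    Integrable (fun v : EuclideanSpace ℝ (Fin k) => ‖v‖ ^ 2 * gaussW s v) := by
  have : Nonempty (Fin k) := ⟨⟨0, hk⟩⟩
  refine (integrable_fun_norm_addHaar (volume : Measure (EuclideanSpace ℝ (Fin k)))
    (f := fun r : ℝ => r ^ 2 * Real.exp (-r ^ 2 / (2 * s)))).2 ?_
  refine (radial_integrable s hs (k - 1 + 2)).congr_fun (fun r _ => ?_) measurableSet_Ioi
  simp [pow_add, mul_assoc]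

/-- `E‖v‖² = s k` for the spherical Gaussian in dimension `k`, in unnormalised form. -/
lemma integral_sq_gaussW (s : ℝ) (hs : 0 < s) (k : ℕ) (hk : 0 < k) :
    ∫ v : EuclideanSpace ℝ (Fin k), ‖v‖ ^ 2 * gaussW s v
      = s * k * ∫ v : EuclideanSpace ℝ (Fin k), gaussW s v := by
  have : Nonempty (Fin k) := ⟨⟨0, hk⟩⟩
  have h1 := integral_fun_norm_addHaar (volume : Measure (EuclideanSpace ℝ (Fin k)))
    (fun r : ℝ => r ^ 2 * Real.exp (-r ^ 2 / (2 * s)))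
  have h2 := integral_fun_norm_addHaar (volume : Measure (EuclideanSpace ℝ (Fin k)))
    (fun r : ℝ => Real.exp (-r ^ 2 / (2 * s)))
  simp only [gaussW]
  rw [h1, h2]
  obtain ⟨d, rfl⟩ : ∃ d, k = d + 1 := ⟨k - 1, by omega⟩
  have h3 := radial_moment_succ s hs d
  simp only [finrank_euclideanSpace, Fintype.card_fin, Nat.add_sub_cancel, smul_eq_mul,
    nsmul_eq_mul, ← mul_assoc, ← pow_add]
  rw [h3]
  push_cast
  ring

/-- The inverse square is integrable against the Gaussian from dimension three on. -/
lemma integrable_inv_gaussW (s : ℝ) (hs : 0 < s) (k : ℕ) (hk : 2 < k) :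
    Integrable (fun v : EuclideanSpace ℝ (Fin k) => (‖v‖ ^ 2)⁻¹ * gaussW s v) := by
  have : Nonempty (Fin k) := ⟨⟨0, by omega⟩⟩
  refine (integrable_fun_norm_addHaar (volume : Measure (EuclideanSpace ℝ (Fin k)))
    (f := fun r : ℝ => (r ^ 2)⁻¹ * Real.exp (-r ^ 2 / (2 * s)))).2 ?_
  obtain ⟨d, rfl⟩ : ∃ d, k = d + 3 := ⟨k - 3, by omega⟩
  refine (radial_integrable s hs d).congr_fun (fun r hr => ?_) measurableSet_Ioi
  have hr : r ≠ 0 := (Set.mem_Ioi.1 hr).ne'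
  have : d + 3 - 1 = d + 2 := by omega
  simp only [finrank_euclideanSpace, Fintype.card_fin, smul_eq_mul, this, pow_add]
  field_simp

/-- `s (k - 2) E‖v‖⁻² = 1`: the inverse moment of a chi-squared variable, unnormalised. -/
lemma integral_inv_gaussW (s : ℝ) (hs : 0 < s) (k : ℕ) (hk : 2 < k) :
    s * ((k : ℝ) - 2) * ∫ v : EuclideanSpace ℝ (Fin k), (‖v‖ ^ 2)⁻¹ * gaussW s v
      = ∫ v : EuclideanSpace ℝ (Fin k), gaussW s v := by
  have : Nonempty (Fin k) := ⟨⟨0, by omega⟩⟩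
  have h1 := integral_fun_norm_addHaar (volume : Measure (EuclideanSpace ℝ (Fin k)))
    (fun r : ℝ => (r ^ 2)⁻¹ * Real.exp (-r ^ 2 / (2 * s)))
  have h2 := integral_fun_norm_addHaar (volume : Measure (EuclideanSpace ℝ (Fin k)))
    (fun r : ℝ => Real.exp (-r ^ 2 / (2 * s)))
  simp only [gaussW]
  rw [h1, h2]
  obtain ⟨d, rfl⟩ : ∃ d, k = d + 3 := ⟨k - 3, by omega⟩
  have h3 := radial_moment_succ s hs d
  have h4 : ∫ r in Set.Ioi (0 : ℝ), r ^ (d + 2) * ((r ^ 2)⁻¹ * Real.exp (-r ^ 2 / (2 * s)))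
      = ∫ r in Set.Ioi (0 : ℝ), r ^ d * Real.exp (-r ^ 2 / (2 * s)) := by
    refine setIntegral_congr_fun measurableSet_Ioi (fun r hr => ?_)
    have hr : r ≠ 0 := (Set.mem_Ioi.1 hr).ne'
    simp only [pow_add]
    field_simp
  have h5 : d + 3 - 1 = d + 2 := by omega
  simp only [finrank_euclideanSpace, Fintype.card_fin, h5, smul_eq_mul, nsmul_eq_mul]
  rw [h3, h4]
  push_cast
  ring

/-! ### Quadratic forms against radial weights -/

/-- For a rotation-invariant weight `ρ(‖v‖)`, the coordinates are uncorrelated and exchangeable,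
so a quadratic form integrates to its trace times the mean square per coordinate. -/
lemma quad_radial {k : ℕ} (ρ : ℝ → ℝ) (hρ : Measurable ρ) (hρ0 : ∀ r, 0 ≤ ρ r)
    (hint : Integrable (fun v : EuclideanSpace ℝ (Fin k) => ‖v‖ ^ 2 * ρ ‖v‖))
    (B : Matrix (Fin k) (Fin k) ℝ) :
    Integrable (fun v : EuclideanSpace ℝ (Fin k) => (v.ofLp ⬝ᵥ (B *ᵥ v.ofLp)) * ρ ‖v‖) ∧
    k * ∫ v : EuclideanSpace ℝ (Fin k), (v.ofLp ⬝ᵥ (B *ᵥ v.ofLp)) * ρ ‖v‖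
      = B.trace * ∫ v : EuclideanSpace ℝ (Fin k), ‖v‖ ^ 2 * ρ ‖v‖ := by
  have hI : ∀ i j, Integrable (fun v : EuclideanSpace ℝ (Fin k) => v i * v j * ρ ‖v‖) := by
    intro i j
    refine hint.mono' (by fun_prop) (Eventually.of_forall fun v => ?_)
    rw [norm_mul, norm_mul, Real.norm_of_nonneg (hρ0 _)]
    gcongr
    · exact hρ0 _
    · rw [sq]
      exact mul_le_mul (PiLp.norm_apply_le v i) (PiLp.norm_apply_le v j) (norm_nonneg _)
        (norm_nonneg _)
  -- flipping the sign of coordinate `i` kills the off-diagonal moments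
  have hoff : ∀ i j, i ≠ j → ∫ v : EuclideanSpace ℝ (Fin k), v i * v j * ρ ‖v‖ = 0 := by
    intro i j hij
    let e : EuclideanSpace ℝ (Fin k) ≃ₗᵢ[ℝ] EuclideanSpace ℝ (Fin k) :=
      LinearIsometryEquiv.piLpCongrRight 2
        (fun a => if a = i then LinearIsometryEquiv.neg ℝ else LinearIsometryEquiv.refl ℝ ℝ)
    have hmp := e.measurePreserving.integral_comp e.toHomeomorph.measurableEmbedding
      (fun v : EuclideanSpace ℝ (Fin k) => v i * v j * ρ ‖v‖)
    have h1 : ∀ v, e v i = - v i := fun v => by simp [e]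
    have h2 : ∀ v, e v j = v j := fun v => by simp [e, hij.symm]
    simp only [h1, h2, e.norm_map, neg_mul, integral_neg] at hmp
    linarith
  -- swapping two coordinates identifies the diagonal moments
  have hdiag : ∀ i j, ∫ v : EuclideanSpace ℝ (Fin k), v i * v i * ρ ‖v‖
      = ∫ v : EuclideanSpace ℝ (Fin k), v j * v j * ρ ‖v‖ := by
    intro i j
    let e : EuclideanSpace ℝ (Fin k) ≃ₗᵢ[ℝ] EuclideanSpace ℝ (Fin k) :=
      LinearIsometryEquiv.piLpCongrLeft 2 ℝ ℝ (Equiv.swap i j)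
    have hmp := e.measurePreserving.integral_comp e.toHomeomorph.measurableEmbedding
      (fun v : EuclideanSpace ℝ (Fin k) => v i * v i * ρ ‖v‖)
    have h1 : ∀ v, e v i = v j := fun v => by
      simp [e, LinearIsometryEquiv.piLpCongrLeft_apply, Equiv.piCongrLeft'_apply]
    simp only [h1, e.norm_map] at hmp
    exact hmp.symm
  have hsq : ∀ i, k * ∫ v : EuclideanSpace ℝ (Fin k), v i * v i * ρ ‖v‖
      = ∫ v : EuclideanSpace ℝ (Fin k), ‖v‖ ^ 2 * ρ ‖v‖ := by
    intro i
    have : ∀ v : EuclideanSpace ℝ (Fin k), ‖v‖ ^ 2 * ρ ‖v‖ = ∑ j, v j * v j * ρ ‖v‖ := by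
      intro v
      rw [EuclideanSpace.real_norm_sq_eq, Finset.sum_mul]
      simp only [sq]
    simp only [this]
    rw [integral_finsetSum _ (fun j _ => hI j j), Finset.sum_congr rfl (fun j _ => hdiag j i)]
    simp
  have hexp : ∀ v : EuclideanSpace ℝ (Fin k), (v.ofLp ⬝ᵥ (B *ᵥ v.ofLp)) * ρ ‖v‖
      = ∑ i, ∑ j, B i j * (v i * v j * ρ ‖v‖) := by
    intro v
    simp only [dotProduct, mulVec, Finset.mul_sum, Finset.sum_mul]
    refine Finset.sum_congr rfl fun i _ => Finset.sum_congr rfl fun j _ => by ring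
  have hJ : ∀ i j, Integrable
      (fun v : EuclideanSpace ℝ (Fin k) => B i j * (v i * v j * ρ ‖v‖)) :=
    fun i j => (hI i j).const_mul _
  have hJs : ∀ i, Integrable
      (fun v : EuclideanSpace ℝ (Fin k) => ∑ j, B i j * (v i * v j * ρ ‖v‖)) :=
    fun i => integrable_finsetSum _ fun j _ => hJ i j
  rw [funext hexp]
  refine ⟨integrable_finsetSum _ fun i _ => hJs i, ?_⟩
  rw [integral_finsetSum _ fun i _ => hJs i, Finset.mul_sum, Matrix.trace, Finset.sum_mul]
  refine Finset.sum_congr rfl fun i _ => ?_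
  rw [integral_finsetSum _ fun j _ => hJ i j, Finset.sum_eq_single i]
  · rw [integral_const_mul, ← hsq i, Matrix.diag_apply]
    ring
  · intro j _ hji
    rw [integral_const_mul, hoff i j hji.symm, mul_zero]
  · simp

/-! ### A frame adapted to the candidate model -/

lemma mulVec_injective_of_rank {n p : ℕ} (X : Matrix (Fin n) (Fin p) ℝ) (hX : X.rank = p) :
    Function.Injective X.mulVec := by
  rw [Matrix.mulVec_injective_iff, linearIndependent_iff_card_eq_finrank_span, Set.finrank,
    ← Matrix.rank_eq_finrank_span_cols, hX, Fintype.card_fin]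

open scoped MatrixOrder in
lemma exists_factor {n : ℕ} (S : Matrix (Fin n) (Fin n) ℝ) (hS : S.PosDef) :
    ∃ b : Matrix (Fin n) (Fin n) ℝ, IsUnit b ∧ S = bᵀ * b := by
  obtain ⟨b, hb, h⟩ := CStarAlgebra.isStrictlyPositive_iff_eq_star_mul_self.mp
    hS.isStrictlyPositive
  exact ⟨b, hb, by rw [h, Matrix.star_eq_conjTranspose, conjTranspose_eq_transpose_of_trivial]⟩

/-- The orthogonal complement of the columns of a full-rank matrix has an orthonormal basis,
recorded as the columns of a matrix. -/
lemma exists_orthonormal_compl {n p : ℕ} (Y : Matrix (Fin n) (Fin p) ℝ) (hY : Y.rank = p) :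
    ∃ Q : Matrix (Fin n) (Fin (n - p)) ℝ, Qᵀ * Q = 1 ∧ Yᵀ * Q = 0 := by
  let f : EuclideanSpace ℝ (Fin n) →ₗ[ℝ] (Fin p → ℝ) :=
    Yᵀ.mulVecLin ∘ₗ (WithLp.linearEquiv 2 ℝ (Fin n → ℝ)).toLinearMap
  have hr : Module.finrank ℝ (LinearMap.range f) = p := by
    rw [LinearMap.range_comp_of_range_eq_top _ (LinearEquiv.range _)]
    exact (Matrix.rank_transpose Y).trans hY
  have hk : Module.finrank ℝ (LinearMap.ker f) = n - p := by
    have := LinearMap.finrank_range_add_finrank_ker f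
    rw [hr, finrank_euclideanSpace, Fintype.card_fin] at this
    omega
  obtain ⟨e⟩ : Nonempty (OrthonormalBasis (Fin (n - p)) ℝ (LinearMap.ker f)) :=
    ⟨(stdOrthonormalBasis ℝ (LinearMap.ker f)).reindex (finCongr hk)⟩
  refine ⟨Matrix.of fun i j => (e j : EuclideanSpace ℝ (Fin n)) i, ?_, ?_⟩
  · ext i j
    have h := orthonormal_iff_ite.1 e.orthonormal i j
    rw [Submodule.coe_inner, PiLp.inner_apply] at h
    rw [Matrix.mul_apply, Matrix.one_apply, ← h]
    exact Finset.sum_congr rfl fun a _ => mul_comm _ _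
  · ext i j
    have h : f (e j) = 0 := (e j).2
    exact congrFun h i

/-- A frame `(X K, T)` of `ℝⁿ`, orthonormal for the inner product `S⁻¹`, whose first block spans
the column space of `X`. -/
lemma exists_frame {n p : ℕ} (X : Matrix (Fin n) (Fin p) ℝ) (hX : X.rank = p)
    (S : Matrix (Fin n) (Fin n) ℝ) (hS : S.PosDef) :
    ∃ (K : Matrix (Fin p) (Fin p) ℝ) (T : Matrix (Fin n) (Fin (n - p)) ℝ),
      IsUnit (Xᵀ * S⁻¹ * X) ∧
      K * Kᵀ = (Xᵀ * S⁻¹ * X)⁻¹ ∧ (X * K)ᵀ * S⁻¹ * (X * K) = 1 ∧ Tᵀ * S⁻¹ * T = 1 ∧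
      Xᵀ * S⁻¹ * T = 0 ∧ X * K * (X * K)ᵀ + T * Tᵀ = S := by
  have hSu : IsUnit S.det := (Matrix.isUnit_iff_isUnit_det _).1 hS.isUnit
  have hpn : p ≤ n := by
    have := X.rank_le_card_height
    rwa [hX, Fintype.card_fin] at this
  have hG : (Xᵀ * S⁻¹ * X).PosDef := by
    have := hS.inv.conjTranspose_mul_mul_same (mulVec_injective_of_rank X hX)
    rwa [conjTranspose_eq_transpose_of_trivial] at this
  have hGu : IsUnit (Xᵀ * S⁻¹ * X).det := (Matrix.isUnit_iff_isUnit_det _).1 hG.isUnit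
  obtain ⟨k, hk, hkk⟩ := exists_factor _ hG
  obtain ⟨b, hb, hbb⟩ := exists_factor _ hS.inv
  have hku : IsUnit k.det := (Matrix.isUnit_iff_isUnit_det _).1 hk
  have hbu : IsUnit b.det := (Matrix.isUnit_iff_isUnit_det _).1 hb
  obtain ⟨Q, hQ1, hQ2⟩ := exists_orthonormal_compl (b * X)
    (by rw [Matrix.rank_mul_eq_right_of_isUnit_det _ _ hbu, hX])
  have hK1 : (X * k⁻¹)ᵀ * S⁻¹ * (X * k⁻¹) = 1 := by
    calc (X * k⁻¹)ᵀ * S⁻¹ * (X * k⁻¹) = (k⁻¹)ᵀ * (Xᵀ * S⁻¹ * X) * k⁻¹ := by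
          simp only [Matrix.transpose_mul, Matrix.mul_assoc]
      _ = (k * k⁻¹)ᵀ * (k * k⁻¹) := by
          rw [hkk]; simp only [Matrix.transpose_mul, Matrix.mul_assoc]
      _ = 1 := by rw [Matrix.mul_nonsing_inv _ hku]; simp
  have hT1 : (b⁻¹ * Q)ᵀ * S⁻¹ * (b⁻¹ * Q) = 1 := by
    calc (b⁻¹ * Q)ᵀ * S⁻¹ * (b⁻¹ * Q) = Qᵀ * ((b * b⁻¹)ᵀ * (b * b⁻¹)) * Q := by
          rw [hbb]; simp only [Matrix.transpose_mul, Matrix.mul_assoc]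
      _ = 1 := by rw [Matrix.mul_nonsing_inv _ hbu]; simp [hQ1]
  have hT2 : Xᵀ * S⁻¹ * (b⁻¹ * Q) = 0 := by
    calc Xᵀ * S⁻¹ * (b⁻¹ * Q) = (b * X)ᵀ * (b * b⁻¹) * Q := by
          rw [hbb]; simp only [Matrix.transpose_mul, Matrix.mul_assoc]
      _ = 0 := by rw [Matrix.mul_nonsing_inv _ hbu, Matrix.mul_one, hQ2]
  refine ⟨k⁻¹, b⁻¹ * Q, hG.isUnit, ?_, hK1, hT1, hT2, ?_⟩
  · rw [hkk, Matrix.mul_inv_rev, Matrix.transpose_nonsing_inv]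
  · have hST : (S⁻¹)ᵀ = S⁻¹ := by
      have := hS.inv.isHermitian.eq
      rwa [conjTranspose_eq_transpose_of_trivial] at this
    have hT3 : (b⁻¹ * Q)ᵀ * S⁻¹ * X = 0 := by
      have := congrArg Matrix.transpose hT2
      simpa only [Matrix.transpose_mul, Matrix.transpose_transpose, hST, Matrix.mul_assoc,
        Matrix.transpose_zero] using this
    -- the frame is a square matrix `F` with left inverse `Fᵀ S⁻¹`, hence `F Fᵀ S⁻¹ = 1`
    have hleft : (Matrix.fromRows ((X * k⁻¹)ᵀ * S⁻¹) ((b⁻¹ * Q)ᵀ * S⁻¹))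
        * Matrix.fromCols (X * k⁻¹) (b⁻¹ * Q) = 1 := by
      rw [Matrix.fromRows_mul_fromCols, hK1, hT1, ← Matrix.fromBlocks_one]
      congr 1
      · rw [Matrix.transpose_mul, Matrix.mul_assoc, Matrix.mul_assoc, ← Matrix.mul_assoc Xᵀ, hT2,
          Matrix.mul_zero]
      · rw [← Matrix.mul_assoc, hT3, Matrix.zero_mul]
    have hright := (Matrix.mul_eq_one_comm_of_equiv
      (finSumFinEquiv.trans (finCongr (by omega : p + (n - p) = n)))).1 hleft
    rw [Matrix.fromCols_mul_fromRows, ← Matrix.mul_assoc, ← Matrix.mul_assoc,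
      ← Matrix.add_mul] at hright
    calc _ = (X * k⁻¹ * (X * k⁻¹)ᵀ + b⁻¹ * Q * (b⁻¹ * Q)ᵀ) * S⁻¹ * S := by
          rw [Matrix.mul_assoc _ S⁻¹ S, Matrix.nonsing_inv_mul _ hSu, Matrix.mul_one]
      _ = S := by rw [hright, Matrix.one_mul]

/-! ### Change of variables -/

/-- Equality of two integrals may be tested in affine coordinates: the Jacobian is a common
constant. -/
lemma affine_transfer {V : Type*} [NormedAddCommGroup V] [NormedSpace ℝ V]
    [MeasureSpace V] [BorelSpace V] [SecondCountableTopology V]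
    [(volume : Measure V).IsAddHaarMeasure] {n : ℕ} (Φ : V ≃L[ℝ] (Fin n → ℝ)) (μ : Fin n → ℝ)
    (f g : (Fin n → ℝ) → ℝ) (hf : Integrable (fun z => f (μ + Φ z)))
    (hg : Integrable (fun z => g (μ + Φ z)))
    (hfg : ∫ z, f (μ + Φ z) = ∫ z, g (μ + Φ z)) :
    Integrable f ∧ Integrable g ∧ ∫ y, f y = ∫ y, g y := by
  have hH : (Measure.map Φ (volume : Measure V)).IsAddHaarMeasure :=
    Φ.isAddHaarMeasure_map _
  have hΦ : MeasurableEmbedding Φ := Φ.toHomeomorph.measurableEmbedding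
  obtain ⟨c, hv⟩ : ∃ c : NNReal,
      (volume : Measure (Fin n → ℝ)) = c • Measure.map Φ (volume : Measure V) :=
    ⟨_, Measure.isAddLeftInvariant_eq_smul _ _⟩
  have key : ∀ h : (Fin n → ℝ) → ℝ, Integrable (fun z => h (μ + Φ z)) →
      Integrable h ∧ ∫ y, h y = c • ∫ z, h (μ + Φ z) := by
    intro h hh
    have h1 : Integrable (fun y => h (μ + y)) (volume : Measure (Fin n → ℝ)) := by
      rw [hv]
      exact ((hΦ.integrable_map_iff (g := fun y => h (μ + y))).2 hh).smul_measure_nnreal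
    refine ⟨?_, ?_⟩
    · simpa using h1.comp_add_left (-μ)
    · rw [← integral_add_left_eq_self h μ, hv, integral_smul_nnreal_measure, hΦ.integral_map]
  obtain ⟨hf1, hf2⟩ := key f hf
  obtain ⟨hg1, hg2⟩ := key g hg
  exact ⟨hf1, hg1, by rw [hf2, hg2, hfg]⟩

/-- The moment identity in adapted coordinates: `u` carries the estimated coefficients, `v` the
residuals, `B` and `D` are the two quadratic forms, and `k = n - p`. -/
lemma core_moments (s : ℝ) (hs : 0 < s) (p k : ℕ) (hk : 2 < k) (N t C : ℝ)
    (B : Matrix (Fin k) (Fin k) ℝ) (D : Matrix (Fin p) (Fin p) ℝ) :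
    Integrable (fun z : EuclideanSpace ℝ (Fin p) × EuclideanSpace ℝ (Fin k) =>
      ((z.2.ofLp ⬝ᵥ (B *ᵥ z.2.ofLp)) / (‖z.2‖ ^ 2 / N)
        + (N / ((k : ℝ) - 2) * (t + D.trace) + N / k * -B.trace))
        * (C * (gaussW s z.1 * gaussW s z.2))) ∧
    Integrable (fun z : EuclideanSpace ℝ (Fin p) × EuclideanSpace ℝ (Fin k) =>
      (t * s / (‖z.2‖ ^ 2 / N) + (z.1.ofLp ⬝ᵥ (D *ᵥ z.1.ofLp)) / (‖z.2‖ ^ 2 / N))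
        * (C * (gaussW s z.1 * gaussW s z.2))) ∧
    ∫ z : EuclideanSpace ℝ (Fin p) × EuclideanSpace ℝ (Fin k),
      ((z.2.ofLp ⬝ᵥ (B *ᵥ z.2.ofLp)) / (‖z.2‖ ^ 2 / N)
        + (N / ((k : ℝ) - 2) * (t + D.trace) + N / k * -B.trace))
        * (C * (gaussW s z.1 * gaussW s z.2))
    = ∫ z : EuclideanSpace ℝ (Fin p) × EuclideanSpace ℝ (Fin k),
      (t * s / (‖z.2‖ ^ 2 / N) + (z.1.ofLp ⬝ᵥ (D *ᵥ z.1.ofLp)) / (‖z.2‖ ^ 2 / N))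
        * (C * (gaussW s z.1 * gaussW s z.2)) := by
  have hk2 : (0 : ℝ) < (k : ℝ) - 2 := by
    have : ((2 : ℕ) : ℝ) < k := Nat.cast_lt.2 hk
    push_cast at this
    linarith
  have hk0 : (0 : ℝ) < k := by linarith
  have hk' : 0 < k := by omega
  have : Nonempty (Fin k) := ⟨⟨0, hk'⟩⟩
  have wu := integrable_gaussW s hs p
  have wv := integrable_gaussW s hs k
  have wi := integrable_inv_gaussW s hs k hk
  -- the quadratic form in `v`, normalised by `‖v‖²`
  have hcancel : (fun v : EuclideanSpace ℝ (Fin k) =>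
      ‖v‖ ^ 2 * ((‖v‖ ^ 2)⁻¹ * Real.exp (-‖v‖ ^ 2 / (2 * s)))) =ᵐ[volume]
      fun v => gaussW s v := by
    filter_upwards [Measure.ae_ne (volume : Measure (EuclideanSpace ℝ (Fin k))) 0] with v hv
    have : ‖v‖ ≠ 0 := norm_ne_zero_iff.2 hv
    simp only [gaussW]
    field_simp
  obtain ⟨qv, qv'⟩ := quad_radial (k := k)
    (fun r => (r ^ 2)⁻¹ * Real.exp (-r ^ 2 / (2 * s))) (by fun_prop) (fun r => by positivity)
    (wv.congr hcancel.symm) B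
  rw [integral_congr_ae hcancel] at qv'
  have qu : Integrable (fun u : EuclideanSpace ℝ (Fin p) =>
        (u.ofLp ⬝ᵥ (D *ᵥ u.ofLp)) * Real.exp (-‖u‖ ^ 2 / (2 * s))) ∧
      ∫ u : EuclideanSpace ℝ (Fin p), (u.ofLp ⬝ᵥ (D *ᵥ u.ofLp)) * Real.exp (-‖u‖ ^ 2 / (2 * s))
        = D.trace * (s * ∫ u : EuclideanSpace ℝ (Fin p), gaussW s u) := by
    rcases Nat.eq_zero_or_pos p with rfl | hp
    · simp [dotProduct, Matrix.trace]
    · obtain ⟨h1, h2⟩ := quad_radial (k := p)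
        (fun r => Real.exp (-r ^ 2 / (2 * s))) (by fun_prop) (fun r => by positivity)
        (integrable_sq_gaussW s hs p hp) D
      refine ⟨h1, ?_⟩
      have h3 := integral_sq_gaussW s hs p hp
      simp only [gaussW] at h3 ⊢
      rw [h3] at h2
      have hp0 : (p : ℝ) ≠ 0 := Nat.cast_ne_zero.2 hp.ne'
      apply mul_left_cancel₀ hp0
      rw [h2]
      ring
  obtain ⟨qu, qu'⟩ := qu
  have hi := integral_inv_gaussW s hs k hk
  have i1 := ((wu.mul_prod qv).const_mul (C * N))
  have i2 := ((wu.mul_prod wv).const_mul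
    (C * (N / ((k : ℝ) - 2) * (t + D.trace) + N / k * -B.trace)))
  have i3 := ((wu.mul_prod wi).const_mul (C * (t * s * N)))
  have i4 := ((qu.mul_prod wi).const_mul (C * N))
  have e1 : (fun z : EuclideanSpace ℝ (Fin p) × EuclideanSpace ℝ (Fin k) =>
      ((z.2.ofLp ⬝ᵥ (B *ᵥ z.2.ofLp)) / (‖z.2‖ ^ 2 / N)
        + (N / ((k : ℝ) - 2) * (t + D.trace) + N / k * -B.trace))
        * (C * (gaussW s z.1 * gaussW s z.2))) = fun z =>
      C * N * (gaussW s z.1 * ((z.2.ofLp ⬝ᵥ (B *ᵥ z.2.ofLp))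
        * ((‖z.2‖ ^ 2)⁻¹ * Real.exp (-‖z.2‖ ^ 2 / (2 * s)))))
      + C * (N / ((k : ℝ) - 2) * (t + D.trace) + N / k * -B.trace)
        * (gaussW s z.1 * gaussW s z.2) := by
    funext z
    simp only [div_div_eq_mul_div, div_eq_mul_inv _ (‖z.2‖ ^ 2), gaussW]
    ring
  have e2 : (fun z : EuclideanSpace ℝ (Fin p) × EuclideanSpace ℝ (Fin k) =>
      (t * s / (‖z.2‖ ^ 2 / N) + (z.1.ofLp ⬝ᵥ (D *ᵥ z.1.ofLp)) / (‖z.2‖ ^ 2 / N))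
        * (C * (gaussW s z.1 * gaussW s z.2))) = fun z =>
      C * (t * s * N) * (gaussW s z.1 * ((‖z.2‖ ^ 2)⁻¹ * gaussW s z.2))
      + C * N * ((z.1.ofLp ⬝ᵥ (D *ᵥ z.1.ofLp)) * Real.exp (-‖z.1‖ ^ 2 / (2 * s))
        * ((‖z.2‖ ^ 2)⁻¹ * gaussW s z.2)) := by
    funext z
    simp only [div_div_eq_mul_div, div_eq_mul_inv _ (‖z.2‖ ^ 2), gaussW]
    ring
  rw [← Measure.volume_eq_prod] at i1 i2 i3 i4
  rw [e1, e2]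
  refine ⟨i1.add i2, i3.add i4, ?_⟩
  have j1 := integral_prod_mul (μ := volume) (ν := volume)
    (fun u : EuclideanSpace ℝ (Fin p) => gaussW s u)
    (fun v : EuclideanSpace ℝ (Fin k) => (v.ofLp ⬝ᵥ (B *ᵥ v.ofLp))
        * ((‖v‖ ^ 2)⁻¹ * Real.exp (-‖v‖ ^ 2 / (2 * s))))
  have j2 := integral_prod_mul (μ := volume) (ν := volume)
    (fun u : EuclideanSpace ℝ (Fin p) => gaussW s u)
    (fun v : EuclideanSpace ℝ (Fin k) => gaussW s v)
  have j3 := integral_prod_mul (μ := volume) (ν := volume)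
    (fun u : EuclideanSpace ℝ (Fin p) => gaussW s u)
    (fun v : EuclideanSpace ℝ (Fin k) => (‖v‖ ^ 2)⁻¹ * gaussW s v)
  have j4 := integral_prod_mul (μ := volume) (ν := volume)
    (fun u : EuclideanSpace ℝ (Fin p) =>
      (u.ofLp ⬝ᵥ (D *ᵥ u.ofLp)) * Real.exp (-‖u‖ ^ 2 / (2 * s)))
    (fun v : EuclideanSpace ℝ (Fin k) => (‖v‖ ^ 2)⁻¹ * gaussW s v)
  rw [← Measure.volume_eq_prod] at j1 j2 j3 j4
  rw [integral_add i1 i2, integral_add i3 i4, integral_const_mul, integral_const_mul,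
    integral_const_mul, integral_const_mul]
  rw [j1, j2, j3, j4, qu', ← hi]
  rw [← hi] at qv'
  rw [mul_comm, ← eq_div_iff hk0.ne'] at qv'
  rw [qv']
  field_simp
  ring

/-! ### The statistics in adapted coordinates -/

/-- The frame as linear coordinates `(u, v) ↦ X K u + T v` on `ℝⁿ`. -/
lemma exists_coords {n p k : ℕ} (X : Matrix (Fin n) (Fin p) ℝ)
    (S : Matrix (Fin n) (Fin n) ℝ) (hSu : IsUnit S.det) (hST : (S⁻¹)ᵀ = S⁻¹)
    (K : Matrix (Fin p) (Fin p) ℝ) (T : Matrix (Fin n) (Fin k) ℝ)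
    (hXK : (X * K)ᵀ * S⁻¹ * (X * K) = 1) (hTT : Tᵀ * S⁻¹ * T = 1) (hXT : Xᵀ * S⁻¹ * T = 0)
    (hsum : X * K * (X * K)ᵀ + T * Tᵀ = S) :
    ∃ Φ : (EuclideanSpace ℝ (Fin p) × EuclideanSpace ℝ (Fin k)) ≃L[ℝ] (Fin n → ℝ),
      ∀ z, Φ z = (X * K) *ᵥ z.1.ofLp + T *ᵥ z.2.ofLp := by
  have hTX : Tᵀ * S⁻¹ * (X * K) = 0 := by
    have h := congrArg Matrix.transpose hXT
    rw [Matrix.transpose_mul, Matrix.transpose_mul, hST, Matrix.transpose_transpose,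
      ← Matrix.mul_assoc, Matrix.transpose_zero] at h
    rw [← Matrix.mul_assoc, h, Matrix.zero_mul]
  have hXT' : (X * K)ᵀ * S⁻¹ * T = 0 := by
    rw [Matrix.transpose_mul, Matrix.mul_assoc, Matrix.mul_assoc, ← Matrix.mul_assoc Xᵀ, hXT,
      Matrix.mul_zero]
  let e : (EuclideanSpace ℝ (Fin p) × EuclideanSpace ℝ (Fin k)) ≃ₗ[ℝ] (Fin n → ℝ) :=
    { toFun := fun z => (X * K) *ᵥ z.1.ofLp + T *ᵥ z.2.ofLp
      map_add' := fun z w => by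
        simp only [Prod.fst_add, Prod.snd_add, WithLp.ofLp_add, mulVec_add]
        abel
      map_smul' := fun r z => by
        simp only [Prod.smul_fst, Prod.smul_snd, WithLp.ofLp_smul, mulVec_smul, smul_add,
          RingHom.id_apply]
      invFun := fun y =>
        (WithLp.toLp 2 (((X * K)ᵀ * S⁻¹) *ᵥ y), WithLp.toLp 2 ((Tᵀ * S⁻¹) *ᵥ y))
      left_inv := fun z => by
        simp only [mulVec_add, mulVec_mulVec, hXK, hTT, hTX, hXT', one_mulVec, zero_mulVec,
          add_zero, zero_add, WithLp.toLp_ofLp]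
      right_inv := fun y => by
        simp only [mulVec_mulVec, ← add_mulVec]
        rw [← Matrix.mul_assoc, ← Matrix.mul_assoc, ← Matrix.add_mul, hsum,
          Matrix.mul_nonsing_inv _ hSu, one_mulVec] }
  exact ⟨e.toContinuousLinearEquiv, fun z => rfl⟩

lemma bilin_pull {n p k : ℕ} (T : Matrix (Fin n) (Fin p) ℝ) (S : Matrix (Fin n) (Fin n) ℝ)
    (T' : Matrix (Fin n) (Fin k) ℝ) (u : Fin p → ℝ) (v : Fin k → ℝ) :
    (T *ᵥ u) ⬝ᵥ (S *ᵥ (T' *ᵥ v)) = u ⬝ᵥ ((Tᵀ * S * T') *ᵥ v) := by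
  rw [← mulVec_mulVec, ← mulVec_mulVec, dotProduct_mulVec u, vecMul_transpose]

namespace CSModel

variable {pw pj n : ℕ} (M : CSModel pw pj n)

lemma posDef_Sig : M.Sig.PosDef := by
  have h := M.hG.posSemidef.mul_mul_conjTranspose_same M.Z
  rw [conjTranspose_eq_transpose_of_trivial] at h
  exact Matrix.PosDef.posSemidef_add h M.hR

/-- Full column rank of `X(ω)` upgrades `X(ω)β* = X(j)c` to the same relation for the predictive
design: `β*` vanishes off `j` and equals `c` on `j`. -/
lemma predictive_mean (c : Fin pj → ℝ) (hc : M.Xw *ᵥ M.beta = M.Xj *ᵥ c) :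
    M.Xtw *ᵥ M.beta = M.Xtj *ᵥ c := by
  have hsub : ∀ {l : ℕ} (Y : Matrix (Fin l) (Fin pw) ℝ),
      Y.submatrix id M.emb *ᵥ c = Y *ᵥ (fun a => ∑ i, if M.emb i = a then c i else 0) := by
    intro l Y
    funext r
    simp only [mulVec, dotProduct, submatrix_apply, id, Finset.mul_sum, mul_ite, mul_zero]
    rw [Finset.sum_comm]
    simp
  have hb : M.beta = fun a => ∑ i, if M.emb i = a then c i else 0 := by
    apply mulVec_injective_of_rank M.Xw M.hrankw
    rw [hc, Xj, hsub]
  rw [Xtj, hsub, ← hb]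

/-- The criterion and the integrand of `cAI`, both without the shared term
`m log(2πσ̂²) + log|R̃|`, are integrable with the same mean. -/
lemma core_unbiased (hover : M.Overspec) (hn : pj + 2 < n) :
    Integrable (fun y =>
      (((y - M.Xj *ᵥ M.betaHat y - M.Z *ᵥ M.bHat y) ⬝ᵥ
          (M.Rm⁻¹ *ᵥ (y - M.Xj *ᵥ M.betaHat y - M.Z *ᵥ M.bHat y))) / M.sigHat2 y
        + ((n : ℝ) / ((n : ℝ) - pj - 2) *
            ((M.Rt⁻¹ * M.Lam).trace
              + (M.Rt⁻¹ * M.Amat * (M.Xjᵀ * M.Sig⁻¹ * M.Xj)⁻¹ * M.Amatᵀ).trace)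
          + (n : ℝ) / ((n : ℝ) - pj) *
            (-(M.Rm * M.Sig⁻¹).trace + (M.Rm * M.Pj).trace)))
        * gaussDensity (M.Xw *ᵥ M.beta) M.sig2 M.Sig y) ∧
    Integrable (fun y =>
      ((M.Rt⁻¹ * M.Lam).trace * M.sig2 / M.sigHat2 y
        + (M.avec y ⬝ᵥ (M.Rt⁻¹ *ᵥ M.avec y)) / M.sigHat2 y)
        * gaussDensity (M.Xw *ᵥ M.beta) M.sig2 M.Sig y) ∧
    ∫ y, (((y - M.Xj *ᵥ M.betaHat y - M.Z *ᵥ M.bHat y) ⬝ᵥ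
          (M.Rm⁻¹ *ᵥ (y - M.Xj *ᵥ M.betaHat y - M.Z *ᵥ M.bHat y))) / M.sigHat2 y
        + ((n : ℝ) / ((n : ℝ) - pj - 2) *
            ((M.Rt⁻¹ * M.Lam).trace
              + (M.Rt⁻¹ * M.Amat * (M.Xjᵀ * M.Sig⁻¹ * M.Xj)⁻¹ * M.Amatᵀ).trace)
          + (n : ℝ) / ((n : ℝ) - pj) *
            (-(M.Rm * M.Sig⁻¹).trace + (M.Rm * M.Pj).trace)))
        * gaussDensity (M.Xw *ᵥ M.beta) M.sig2 M.Sig y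
    = ∫ y, ((M.Rt⁻¹ * M.Lam).trace * M.sig2 / M.sigHat2 y
        + (M.avec y ⬝ᵥ (M.Rt⁻¹ *ᵥ M.avec y)) / M.sigHat2 y)
        * gaussDensity (M.Xw *ᵥ M.beta) M.sig2 M.Sig y := by
  obtain ⟨c, hc⟩ := hover
  have hS := M.posDef_Sig
  have hSu : IsUnit M.Sig.det := (Matrix.isUnit_iff_isUnit_det _).1 hS.isUnit
  have hRu : IsUnit M.Rm.det := (Matrix.isUnit_iff_isUnit_det _).1 M.hR.isUnit
  have hRT : M.Rmᵀ = M.Rm := by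
    have := M.hR.isHermitian.eq
    rwa [conjTranspose_eq_transpose_of_trivial] at this
  have hST : (M.Sig⁻¹)ᵀ = M.Sig⁻¹ := by
    have := hS.inv.isHermitian.eq
    rwa [conjTranspose_eq_transpose_of_trivial] at this
  obtain ⟨K, T, hGu, hK, hXK, hTT, hXT, hsum⟩ := exists_frame M.Xj M.hrankj M.Sig hS
  have hGu : IsUnit (M.Xjᵀ * M.Sig⁻¹ * M.Xj).det := (Matrix.isUnit_iff_isUnit_det _).1 hGu
  obtain ⟨Φ, hΦ⟩ := exists_coords M.Xj M.Sig hSu hST K T hXK hTT hXT hsum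
  set μ := M.Xw *ᵥ M.beta with hμ
  set B := Tᵀ * M.Sig⁻¹ * M.Rm * M.Sig⁻¹ * T with hB
  set D := Kᵀ * M.Amatᵀ * M.Rt⁻¹ * M.Amat * K with hD
  have hkn : ((n - pj : ℕ) : ℝ) = (n : ℝ) - pj := Nat.cast_sub (by omega)
  have hgls1 : M.gls * M.Xj = 1 := by
    rw [gls, Matrix.mul_assoc, Matrix.mul_assoc, ← Matrix.mul_assoc M.Xjᵀ,
      Matrix.nonsing_inv_mul _ hGu]
  have hgls2 : M.gls * T = 0 := by
    rw [gls, Matrix.mul_assoc, Matrix.mul_assoc, ← Matrix.mul_assoc M.Xjᵀ, hXT, Matrix.mul_zero]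
  have hbeta : ∀ z, M.betaHat (μ + Φ z) = c + K *ᵥ z.1.ofLp := by
    intro z
    rw [betaHat, hΦ, hc, mulVec_add, mulVec_add, mulVec_mulVec, mulVec_mulVec, mulVec_mulVec,
      ← Matrix.mul_assoc, hgls1, hgls2, one_mulVec, Matrix.one_mul, zero_mulVec, add_zero]
  have hres : ∀ z, M.resid (μ + Φ z) = T *ᵥ z.2.ofLp := by
    intro z
    rw [resid, hbeta, hΦ, hc, mulVec_add, mulVec_mulVec]
    abel
  have hnorm : ∀ {k : ℕ} (v : EuclideanSpace ℝ (Fin k)), v.ofLp ⬝ᵥ v.ofLp = ‖v‖ ^ 2 := by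
    intro k v
    rw [EuclideanSpace.real_norm_sq_eq]
    simp only [dotProduct, sq]
  have hsig : ∀ z, M.sigHat2 (μ + Φ z) = ‖z.2‖ ^ 2 / n := by
    intro z
    rw [sigHat2, hres, bilin_pull, hTT, one_mulVec, hnorm]
  -- `y - Xβ̂ - Zb̂ = R Σ⁻¹ (y - Xβ̂)`, because `Σ - Z G Zᵀ = R`
  have hpred : ∀ z, (μ + Φ z) - M.Xj *ᵥ M.betaHat (μ + Φ z) - M.Z *ᵥ M.bHat (μ + Φ z)
      = (M.Rm * M.Sig⁻¹ * T) *ᵥ z.2.ofLp := by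
    intro z
    have h1 : (μ + Φ z) - M.Xj *ᵥ M.betaHat (μ + Φ z) = T *ᵥ z.2.ofLp := hres z
    have h2 : T - M.Z * (M.Gm * M.Zᵀ * M.Sig⁻¹) * T = M.Rm * M.Sig⁻¹ * T := by
      have h3 : M.Rm = M.Sig - M.Z * M.Gm * M.Zᵀ := by rw [Sig]; abel
      rw [h3, Matrix.sub_mul, Matrix.sub_mul, Matrix.mul_nonsing_inv _ hSu, Matrix.one_mul]
      simp only [Matrix.mul_assoc]
    rw [bHat, hres, h1, mulVec_mulVec, mulVec_mulVec, ← sub_mulVec, ← h2]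
  have hquad : ∀ z, ((μ + Φ z) - M.Xj *ᵥ M.betaHat (μ + Φ z) - M.Z *ᵥ M.bHat (μ + Φ z)) ⬝ᵥ
      (M.Rm⁻¹ *ᵥ ((μ + Φ z) - M.Xj *ᵥ M.betaHat (μ + Φ z) - M.Z *ᵥ M.bHat (μ + Φ z)))
      = z.2.ofLp ⬝ᵥ (B *ᵥ z.2.ofLp) := by
    intro z
    rw [hpred, bilin_pull]
    have : (M.Rm * M.Sig⁻¹ * T)ᵀ * M.Rm⁻¹ * (M.Rm * M.Sig⁻¹ * T) = B := by
      rw [Matrix.mul_assoc M.Rm, ← Matrix.mul_assoc (_ * M.Rm⁻¹), Matrix.mul_assoc _ M.Rm⁻¹ M.Rm,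
        Matrix.nonsing_inv_mul _ hRu, Matrix.mul_one, Matrix.transpose_mul, Matrix.transpose_mul,
        hST, hRT, hB]
      simp only [Matrix.mul_assoc]
    rw [this]
  have havec : ∀ z, M.avec (μ + Φ z) = (M.Amat * K) *ᵥ z.1.ofLp := by
    intro z
    rw [avec, hbeta, M.predictive_mean c hc, ← hμ, hc, mulVec_add, mulVec_add, add_sub_cancel_left,
      add_sub_cancel_left, mulVec_mulVec, mulVec_mulVec, mulVec_mulVec, ← sub_mulVec, Amat,
      Matrix.sub_mul]
  have haq : ∀ z, M.avec (μ + Φ z) ⬝ᵥ (M.Rt⁻¹ *ᵥ M.avec (μ + Φ z))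
      = z.1.ofLp ⬝ᵥ (D *ᵥ z.1.ofLp) := by
    intro z
    rw [havec, bilin_pull, Matrix.transpose_mul, hD]
    simp only [Matrix.mul_assoc]
  have hdens : ∀ z, gaussDensity μ M.sig2 M.Sig (μ + Φ z)
      = (Real.sqrt ((2 * π * M.sig2) ^ n * M.Sig.det))⁻¹
        * (gaussW M.sig2 z.1 * gaussW M.sig2 z.2) := by
    intro z
    have hq : (Φ z) ⬝ᵥ (M.Sig⁻¹ *ᵥ Φ z) = ‖z.1‖ ^ 2 + ‖z.2‖ ^ 2 := by
      have hXT' : (M.Xj * K)ᵀ * M.Sig⁻¹ * T = 0 := by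
        rw [Matrix.transpose_mul, Matrix.mul_assoc, Matrix.mul_assoc, ← Matrix.mul_assoc M.Xjᵀ,
          hXT, Matrix.mul_zero]
      have hTX : Tᵀ * M.Sig⁻¹ * (M.Xj * K) = 0 := by
        have h := congrArg Matrix.transpose hXT'
        rwa [Matrix.transpose_mul, Matrix.transpose_mul, hST, Matrix.transpose_transpose,
          ← Matrix.mul_assoc, Matrix.transpose_zero] at h
      rw [hΦ, mulVec_add, add_dotProduct, dotProduct_add, dotProduct_add, bilin_pull, bilin_pull,
        bilin_pull, bilin_pull, hXK, hTT, hXT', hTX]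
      simp [hnorm]
    rw [gaussDensity, add_sub_cancel_left, hq, gaussW, gaussW, ← Real.exp_add, div_eq_inv_mul]
    congr 2
    ring
  have htrD : (M.Rt⁻¹ * M.Amat * (M.Xjᵀ * M.Sig⁻¹ * M.Xj)⁻¹ * M.Amatᵀ).trace = D.trace := by
    have h1 : M.Rt⁻¹ * M.Amat * (K * Kᵀ) * M.Amatᵀ = (M.Rt⁻¹ * M.Amat * K) * (Kᵀ * M.Amatᵀ) := by
      simp only [Matrix.mul_assoc]
    rw [← hK, h1, Matrix.trace_mul_comm, hD]
    simp only [Matrix.mul_assoc]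
  have htrB : -(M.Rm * M.Sig⁻¹).trace + (M.Rm * M.Pj).trace = -B.trace := by
    have hTT' : T * Tᵀ = M.Sig - M.Xj * (M.Xjᵀ * M.Sig⁻¹ * M.Xj)⁻¹ * M.Xjᵀ := by
      rw [← hK, ← hsum, Matrix.transpose_mul]
      simp only [Matrix.mul_assoc]
      abel
    have h1 : B.trace = (M.Rm * (M.Sig⁻¹ * (T * Tᵀ) * M.Sig⁻¹)).trace := by
      rw [hB, Matrix.trace_mul_comm _ T, Matrix.trace_mul_comm M.Rm]
      simp only [← Matrix.mul_assoc]
      rw [Matrix.trace_mul_comm _ M.Sig⁻¹]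
      simp only [← Matrix.mul_assoc]
    have h2 : M.Sig⁻¹ * (T * Tᵀ) * M.Sig⁻¹ = M.Sig⁻¹ - M.Pj := by
      rw [hTT', Matrix.mul_sub, Matrix.sub_mul, Matrix.nonsing_inv_mul _ hSu, Matrix.one_mul, Pj]
      simp only [Matrix.mul_assoc]
    rw [h1, h2, Matrix.mul_sub, Matrix.trace_sub]
    ring
  obtain ⟨c1, c2, c3⟩ := core_moments M.sig2 M.hsig pj (n - pj) (by omega) (n : ℝ)
    (M.Rt⁻¹ * M.Lam).trace (Real.sqrt ((2 * π * M.sig2) ^ n * M.Sig.det))⁻¹ B D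
  rw [hkn] at c1 c3
  have : (volume : Measure (EuclideanSpace ℝ (Fin pj) ×
      EuclideanSpace ℝ (Fin (n - pj)))).IsAddHaarMeasure := by
    rw [Measure.volume_eq_prod]
    infer_instance
  refine affine_transfer Φ μ _ _ ?_ ?_ ?_
  · simpa only [hquad, hsig, hdens, htrD, htrB] using c1
  · simpa only [haq, hsig, hdens] using c2
  · simpa only [hquad, haq, hsig, hdens, htrD, htrB] using c3

end CSModel

/-- Adding a common term preserves equality of Bochner integrals even if that term is not
integrable: both sides then take the junk value `0`. -/
lemma integral_add_common {α : Type*} [MeasurableSpace α] {ν : Measure α} (h f g : α → ℝ)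
    (hf : Integrable f ν) (hg : Integrable g ν) (hfg : ∫ a, f a ∂ν = ∫ a, g a ∂ν) :
    ∫ a, (h a + f a) ∂ν = ∫ a, (h a + g a) ∂ν := by
  by_cases hh : Integrable h ν
  · rw [integral_add hh hf, integral_add hh hg, hfg]
  · rw [integral_undef, integral_undef]
    · exact fun H => hh ((integrable_add_iff_integrable_left' hg).1 H)
    · exact fun H => hh ((integrable_add_iff_integrable_left' hf).1 H)

open CSModel in
theorem stmt10 {pw pj n : ℕ} (M : CSModel pw pj n)
    (hover : M.Overspec) (hn : pj + 2 < n) :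
    M.E (fun y => (M.m : ℝ) * Real.log (2 * Real.pi * M.sigHat2 y) + Real.log M.Rt.det
        + ((y - M.Xj *ᵥ M.betaHat y - M.Z *ᵥ M.bHat y) ⬝ᵥ
            (M.Rm⁻¹ *ᵥ (y - M.Xj *ᵥ M.betaHat y - M.Z *ᵥ M.bHat y))) / M.sigHat2 y
        + ((n : ℝ) / ((n : ℝ) - pj - 2) *
            ((M.Rt⁻¹ * M.Lam).trace
              + (M.Rt⁻¹ * M.Amat * (M.Xjᵀ * M.Sig⁻¹ * M.Xj)⁻¹ * M.Amatᵀ).trace)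
          + (n : ℝ) / ((n : ℝ) - pj) *
            (-(M.Rm * M.Sig⁻¹).trace + (M.Rm * M.Pj).trace)))
      = M.cAI := by
  obtain ⟨h1, h2, h3⟩ := M.core_unbiased hover hn
  have key := integral_add_common
    (fun y => ((M.m : ℝ) * Real.log (2 * Real.pi * M.sigHat2 y) + Real.log M.Rt.det)
      * gaussDensity (M.Xw *ᵥ M.beta) M.sig2 M.Sig y) _ _ h1 h2 h3
  simp only [← add_mul, ← add_assoc] at key
  simp only [CSModel.cAI, CSModel.E, ← add_assoc]
  exact key

end
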